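/- arXiv:quant-ph/0606244 — 3 statements merged into one kernel-verified Lean document; each statement's English description precedes it below -/
import Mathlib

section
/- For any two orthonormal bases B₁ and B₂ in a d-dimensional complex Hilbert space and any unit vector ψ, the average of the Shannon entropies of the outcome distributions of measuring ψ in B₁ and in B₂ is at least -log c(B₁,B₂), where c(B₁,B₂) is the maximum absolute value of the inner product between an element of B₁ and an element of B₂. -/
/-!
The proof applies the Hadamard three-lines theorem to a single entire function. Write
`a k = ⟪B k, ψ⟫`, `b l = ⟪C l, ψ⟫` and `U k l = ⟪B k, C l⟫`, and consider
`F z = ∑ k, ∑ l, conj (a k) * U k l * b l * exp (z * (log |a k| + log |b l| - log c))`.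
On `re z = 0` the exponential only multiplies the coordinates of `ψ` by phases, so `F z` is a
unimodular number times an inner product of two unit vectors and `|F z| ≤ 1`. On `re z = 1` the
bound `|U k l| ≤ c` gives `|F z| ≤ (∑ |a k| ^ 2) * (∑ |b l| ^ 2) = 1`. Hence `|F| ≤ 1` on the
whole strip, while `F 0 = ‖ψ‖ ^ 2 = 1`. So `re F` restricted to `[0, 1]` is maximal at `0`, and
`0 ≥ re F' 0 = ∑ |a k| ^ 2 * log |a k| + ∑ |b l| ^ 2 * log |b l| - log c`,
which is the entropic uncertainty relation. The terms with `a k = 0` or `b l = 0` vanish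
identically, so the convention `log 0 = 0` is harmless.
-/

open scoped BigOperators

noncomputable section

/-- Inner product `⟪φ, ψ⟫ = ∑ i, conj (φ i) * ψ i` on `ι → ℂ`. -/
def ip {ι : Type*} [Fintype ι] (φ ψ : ι → ℂ) : ℂ :=
  ∑ i, (starRingEnd ℂ) (φ i) * ψ i

/-- Shannon entropy of the outcome distribution of measuring `ψ` in the basis `B`. -/
def shannonH {ι κ : Type*} [Fintype ι] [Fintype κ] (B : κ → ι → ℂ) (ψ : ι → ℂ) : ℝ :=
  ∑ k, Real.negMulLog (‖ip (B k) ψ‖ ^ 2)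

section MaassenUffink

open Complex

variable {ι E : Type*} [Fintype ι] [NormedAddCommGroup E] [InnerProductSpace ℂ E]

/-- The interpolating function of the three-lines argument, for the vector `v` and the bases
`B`, `C`. -/
def interpFun (B C : OrthonormalBasis ι ℂ E) (v : E) (c : ℝ) (z : ℂ) : ℂ :=
  ∑ k, ∑ l, (starRingEnd ℂ) (inner ℂ (B k) v) * inner ℂ (B k) (C l) * inner ℂ (C l) v *
    exp (z * ((Real.log ‖inner ℂ (B k) v‖ + Real.log ‖inner ℂ (C l) v‖ - Real.log c : ℝ) : ℂ))

lemma sum_sum_conj_mul_inner_mul (B C : OrthonormalBasis ι ℂ E) (x y : EuclideanSpace ℂ ι) :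
    ∑ k, ∑ l, (starRingEnd ℂ) (x k) * inner ℂ (B k) (C l) * y l =
      inner ℂ (B.repr.symm x) (C.repr.symm y) := by
  rw [← B.sum_repr_symm, ← C.sum_repr_symm, sum_inner]
  refine Finset.sum_congr rfl fun k _ => ?_
  rw [inner_smul_left, inner_sum, Finset.mul_sum]
  refine Finset.sum_congr rfl fun l _ => ?_
  rw [inner_smul_right]
  ring

lemma sum_inner_mul_inner_right (B C : OrthonormalBasis ι ℂ E) (v : E) (k : ι) :
    ∑ l, inner ℂ (B k) (C l) * inner ℂ (C l) v = inner ℂ (B k) v :=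
  C.sum_inner_mul_inner (B k) v

lemma sum_conj_inner_mul_inner (B C : OrthonormalBasis ι ℂ E) (v : E) (l : ι) :
    ∑ k, (starRingEnd ℂ) (inner ℂ (B k) v) * inner ℂ (B k) (C l) =
      (starRingEnd ℂ) (inner ℂ (C l) v) := by
  simp only [inner_conj_symm]
  exact B.sum_inner_mul_inner v (C l)

lemma interpFun_zero (B C : OrthonormalBasis ι ℂ E) {v : E} (hv : ‖v‖ = 1) (c : ℝ) :
    interpFun B C v c 0 = 1 := by
  simp only [interpFun, zero_mul, exp_zero, mul_one, mul_assoc, ← Finset.mul_sum,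
    sum_inner_mul_inner_right]
  simp only [inner_conj_symm, B.sum_inner_mul_inner]
  rw [inner_self_eq_norm_sq_to_K, hv]
  simp

lemma norm_interpFun_of_re_eq_zero (B C : OrthonormalBasis ι ℂ E) {v : E} (hv : ‖v‖ = 1)
    (c : ℝ) {z : ℂ} (hz : z.re = 0) : ‖interpFun B C v c z‖ ≤ 1 := by
  have hphase (r : ℝ) : ‖exp (z * r)‖ = 1 := by simp [norm_exp, hz]
  -- Since `conj z = -z`, conjugating the phase `exp (-z * log |a k|)` gives the factor in `F`.
  have hconj : (starRingEnd ℂ) z = -z := by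
    apply Complex.ext <;> simp [hz]
  set x : EuclideanSpace ℂ ι :=
    WithLp.toLp 2 fun k => inner ℂ (B k) v * exp (-z * (Real.log ‖inner ℂ (B k) v‖ : ℂ)) with hx
  set y : EuclideanSpace ℂ ι :=
    WithLp.toLp 2 fun l => inner ℂ (C l) v * exp (z * (Real.log ‖inner ℂ (C l) v‖ : ℂ)) with hy
  have hxn : ‖x‖ = 1 := by
    have h : ‖x‖ ^ 2 = 1 := by
      rw [EuclideanSpace.norm_sq_eq]
      have : ∀ k, ‖x k‖ = ‖inner ℂ (B k) v‖ := fun k => by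
        simp [hx, norm_exp, hz]
      simp only [this, B.sum_sq_norm_inner_right, hv, one_pow]
    exact (pow_eq_one_iff_of_nonneg (norm_nonneg x) two_ne_zero).1 h
  have hyn : ‖y‖ = 1 := by
    have h : ‖y‖ ^ 2 = 1 := by
      rw [EuclideanSpace.norm_sq_eq]
      have : ∀ k, ‖y k‖ = ‖inner ℂ (C k) v‖ := fun k => by
        simp [hy, norm_exp, hz]
      simp only [this, C.sum_sq_norm_inner_right, hv, one_pow]
    exact (pow_eq_one_iff_of_nonneg (norm_nonneg y) two_ne_zero).1 h
  have hF : interpFun B C v c z =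
      inner ℂ (B.repr.symm x) (C.repr.symm y) * exp (z * ((-Real.log c : ℝ) : ℂ)) := by
    rw [← sum_sum_conj_mul_inner_mul, interpFun, Finset.sum_mul]
    refine Finset.sum_congr rfl fun k _ => ?_
    rw [Finset.sum_mul]
    refine Finset.sum_congr rfl fun l _ => ?_
    have hxk : (starRingEnd ℂ) (x k) = (starRingEnd ℂ) (inner ℂ (B k) v) *
        exp (z * (Real.log ‖inner ℂ (B k) v‖ : ℂ)) := by
      simp only [hx, map_mul, ← exp_conj, map_neg, hconj, conj_ofReal, neg_neg]
    rw [hxk]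
    simp only [hy, sub_eq_add_neg, ofReal_add, mul_add, exp_add]
    ring
  rw [hF, norm_mul, hphase, mul_one]
  refine (norm_inner_le_norm _ _).trans ?_
  simp [hxn, hyn]

lemma norm_interpFun_of_re_eq_one (B C : OrthonormalBasis ι ℂ E) {v : E} (hv : ‖v‖ = 1)
    {c : ℝ} (hc0 : 0 < c) (hc : ∀ k l, ‖inner ℂ (B k) (C l)‖ ≤ c) {z : ℂ} (hz : z.re = 1) :
    ‖interpFun B C v c z‖ ≤ 1 := by
  have hprod : ∑ k, ∑ l, ‖inner ℂ (B k) v‖ ^ 2 * ‖inner ℂ (C l) v‖ ^ 2 = 1 := by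
    simp only [← Finset.mul_sum, ← Finset.sum_mul, B.sum_sq_norm_inner_right,
      C.sum_sq_norm_inner_right, hv]
    norm_num
  rw [← hprod]
  refine (norm_sum_le _ _).trans (Finset.sum_le_sum fun k _ => ?_)
  refine (norm_sum_le _ _).trans (Finset.sum_le_sum fun l _ => ?_)
  rw [norm_mul, norm_mul, norm_mul, RCLike.norm_conj, norm_exp]
  rcases eq_or_ne (inner ℂ (B k) v) 0 with ha | ha
  · simp [ha]
  rcases eq_or_ne (inner ℂ (C l) v) 0 with hb | hb
  · simp [hb]
  rw [re_mul_ofReal, hz, one_mul, Real.exp_sub, Real.exp_add, Real.exp_log (norm_pos_iff.2 ha),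
    Real.exp_log (norm_pos_iff.2 hb), Real.exp_log hc0]
  calc _ = ‖inner ℂ (B k) v‖ ^ 2 * ‖inner ℂ (C l) v‖ ^ 2 * (‖inner ℂ (B k) (C l)‖ / c) := by
        ring
    _ ≤ _ := mul_le_of_le_one_right (by positivity) ((div_le_one hc0).2 (hc k l))

lemma norm_interpFun_le_one (B C : OrthonormalBasis ι ℂ E) {v : E} (hv : ‖v‖ = 1)
    {c : ℝ} (hc0 : 0 < c) (hc : ∀ k l, ‖inner ℂ (B k) (C l)‖ ≤ c) {z : ℂ}
    (hz : z ∈ HadamardThreeLines.verticalClosedStrip 0 1) :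
    ‖interpFun B C v c z‖ ≤ 1 := by
  have hd : Differentiable ℂ (interpFun B C v c) := by
    unfold interpFun
    fun_prop
  have hB : BddAbove ((norm ∘ interpFun B C v c) ''
      HadamardThreeLines.verticalClosedStrip 0 1) := by
    refine ⟨∑ k, ∑ l, ‖(starRingEnd ℂ) (inner ℂ (B k) v) * inner ℂ (B k) (C l) *
      inner ℂ (C l) v‖ * Real.exp |Real.log ‖inner ℂ (B k) v‖ + Real.log ‖inner ℂ (C l) v‖ -
        Real.log c|, ?_⟩
    rintro _ ⟨w, hw, rfl⟩
    obtain ⟨hw0, hw1⟩ : 0 ≤ w.re ∧ w.re ≤ 1 := hw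
    refine (norm_sum_le _ _).trans (Finset.sum_le_sum fun k _ => ?_)
    refine (norm_sum_le _ _).trans (Finset.sum_le_sum fun l _ => ?_)
    rw [norm_mul, norm_exp, re_mul_ofReal]
    gcongr
    refine (le_abs_self _).trans ?_
    rw [abs_mul, abs_of_nonneg hw0]
    exact mul_le_of_le_one_left (abs_nonneg _) hw1
  simpa using HadamardThreeLines.norm_le_interp_of_mem_verticalClosedStrip₀₁'
    (interpFun B C v c) hz hd.diffContOnCl hB
    (fun w hw => norm_interpFun_of_re_eq_zero B C hv c hw)
    (fun w hw => norm_interpFun_of_re_eq_one B C hv hc0 hc hw)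

lemma hasDerivAt_interpFun_zero (B C : OrthonormalBasis ι ℂ E) {v : E} (hv : ‖v‖ = 1) (c : ℝ) :
    HasDerivAt (interpFun B C v c)
      ((∑ k, ‖inner ℂ (B k) v‖ ^ 2 * Real.log ‖inner ℂ (B k) v‖ +
        ∑ l, ‖inner ℂ (C l) v‖ ^ 2 * Real.log ‖inner ℂ (C l) v‖ - Real.log c : ℝ) : ℂ) 0 := by
  have h : HasDerivAt (interpFun B C v c)
      (∑ k, ∑ l, (starRingEnd ℂ) (inner ℂ (B k) v) * inner ℂ (B k) (C l) * inner ℂ (C l) v *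
        ((Real.log ‖inner ℂ (B k) v‖ + Real.log ‖inner ℂ (C l) v‖ - Real.log c : ℝ) : ℂ)) 0 := by
    unfold interpFun
    refine HasDerivAt.fun_sum fun k _ => HasDerivAt.fun_sum fun l _ => ?_
    refine HasDerivAt.const_mul _ ?_
    simpa using ((hasDerivAt_id (0 : ℂ)).mul_const
      ((Real.log ‖inner ℂ (B k) v‖ + Real.log ‖inner ℂ (C l) v‖ - Real.log c : ℝ) : ℂ)).cexp
  convert h using 1
  have e1 : ∑ k, ∑ l, (starRingEnd ℂ) (inner ℂ (B k) v) * inner ℂ (B k) (C l) *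
      inner ℂ (C l) v * (Real.log ‖inner ℂ (B k) v‖ : ℂ) =
      ∑ k, (‖inner ℂ (B k) v‖ : ℂ) ^ 2 * (Real.log ‖inner ℂ (B k) v‖ : ℂ) := by
    refine Finset.sum_congr rfl fun k _ => ?_
    rw [← Finset.sum_mul]
    simp only [mul_assoc, ← Finset.mul_sum]
    rw [← mul_assoc, sum_inner_mul_inner_right, conj_mul']
  have e2 : ∑ k, ∑ l, (starRingEnd ℂ) (inner ℂ (B k) v) * inner ℂ (B k) (C l) *
      inner ℂ (C l) v * (Real.log ‖inner ℂ (C l) v‖ : ℂ) =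
      ∑ l, (‖inner ℂ (C l) v‖ : ℂ) ^ 2 * (Real.log ‖inner ℂ (C l) v‖ : ℂ) := by
    rw [Finset.sum_comm]
    refine Finset.sum_congr rfl fun l _ => ?_
    rw [← Finset.sum_mul, ← Finset.sum_mul, sum_conj_inner_mul_inner, conj_mul']
  have e3 : ∑ k, ∑ l, (starRingEnd ℂ) (inner ℂ (B k) v) * inner ℂ (B k) (C l) *
      inner ℂ (C l) v = 1 := by
    simpa [interpFun] using interpFun_zero B C hv c
  simp only [ofReal_sub, ofReal_add, mul_sub, mul_add, Finset.sum_sub_distrib,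
    Finset.sum_add_distrib, e1, e2]
  simp only [← Finset.sum_mul, e3, ofReal_sum, ofReal_mul, ofReal_pow,
    one_mul]

/-- The derivative at `0` of `re F` on the real axis is nonpositive, as `re F ≤ 1 = F 0` on
`[0, 1]`. -/
lemma sum_sq_mul_log_le (B C : OrthonormalBasis ι ℂ E) {v : E} (hv : ‖v‖ = 1)
    {c : ℝ} (hc0 : 0 < c) (hc : ∀ k l, ‖inner ℂ (B k) (C l)‖ ≤ c) :
    ∑ k, ‖inner ℂ (B k) v‖ ^ 2 * Real.log ‖inner ℂ (B k) v‖ +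
      ∑ l, ‖inner ℂ (C l) v‖ ^ 2 * Real.log ‖inner ℂ (C l) v‖ ≤ Real.log c := by
  have h := HasDerivAt.real_of_complex (z := 0)
    (by simpa using hasDerivAt_interpFun_zero B C hv c)
  have hslope := (hasDerivWithinAt_iff_tendsto_slope' (s := Set.Ioi (0 : ℝ)) (by simp)).1
    h.hasDerivWithinAt
  have hle := le_of_tendsto (b := 0) hslope (by
    filter_upwards [Ioo_mem_nhdsGT (zero_lt_one' ℝ)] with t ht
    have h1 : (interpFun B C v c (t : ℂ)).re ≤ 1 := (re_le_norm _).trans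
      (norm_interpFun_le_one B C hv hc0 hc ⟨by simpa using ht.1.le, by simpa using ht.2.le⟩)
    have h0 : (interpFun B C v c ((0 : ℝ) : ℂ)).re = 1 := by
      simp [interpFun_zero B C hv c]
    rw [slope_def_field, h0]
    exact div_nonpos_of_nonpos_of_nonneg (by linarith) (by linarith [ht.1]))
  rw [← sub_nonpos]
  simpa [← ofReal_pow, ← ofReal_mul, ← ofReal_sum] using hle

end MaassenUffink

lemma ip_eq_inner {ι : Type*} [Fintype ι] (φ ψ : ι → ℂ) :
    ip φ ψ = inner ℂ (WithLp.toLp 2 φ : EuclideanSpace ℂ ι) (WithLp.toLp 2 ψ) := by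
  simp [ip, PiLp.inner_apply, mul_comm]

lemma exists_orthonormalBasis_of_ip {d : ℕ} (B : Fin d → (Fin d → ℂ))
    (h : ∀ k l, ip (B k) (B l) = if k = l then 1 else 0) :
    ∃ b : OrthonormalBasis (Fin d) ℂ (EuclideanSpace ℂ (Fin d)),
      ∀ k, b k = WithLp.toLp 2 (B k) := by
  have hon : Orthonormal ℂ
      (fun k => (WithLp.toLp 2 (B k) : EuclideanSpace ℂ (Fin d))) := by
    rw [orthonormal_iff_ite]
    intro k l
    rw [← ip_eq_inner, h]
  refine ⟨OrthonormalBasis.mk hon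
    (hon.linearIndependent.span_eq_top_of_card_eq_finrank' (by simp)).ge, fun k => by simp⟩

lemma negMulLog_sq (x : ℝ) : Real.negMulLog (x ^ 2) = -2 * (x ^ 2 * Real.log x) := by
  rw [Real.negMulLog, Real.log_pow]
  push_cast
  ring

/-- Maassen–Uffink entropic uncertainty relation: for two orthonormal bases `B₁`, `B₂`
of `ℂ^d` and a unit vector `ψ`, the average of the two measurement entropies is at
least `-log c` where `c` is the maximal overlap between elements of the two bases. -/
theorem maassen_uffink (d : ℕ) (hd : 0 < d)
    (B₁ B₂ : Fin d → (Fin d → ℂ))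
    (h₁ : ∀ k l, ip (B₁ k) (B₁ l) = if k = l then 1 else 0)
    (h₂ : ∀ k l, ip (B₂ k) (B₂ l) = if k = l then 1 else 0)
    (c : ℝ) (hc : IsGreatest {x : ℝ | ∃ k l, x = ‖ip (B₁ k) (B₂ l)‖} c)
    (ψ : Fin d → ℂ) (hψ : ∑ i, ‖ψ i‖ ^ 2 = 1) :
    (shannonH B₁ ψ + shannonH B₂ ψ) / 2 ≥ - Real.log c := by
  obtain ⟨B, hB⟩ := exists_orthonormalBasis_of_ip B₁ h₁
  obtain ⟨C, hC⟩ := exists_orthonormalBasis_of_ip B₂ h₂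
  set v : EuclideanSpace ℂ (Fin d) := WithLp.toLp 2 ψ with hv_def
  have hv : ‖v‖ = 1 := by
    have h : ‖v‖ ^ 2 = 1 := by rw [EuclideanSpace.norm_sq_eq]; exact hψ
    exact (pow_eq_one_iff_of_nonneg (norm_nonneg v) two_ne_zero).1 h
  have hle : ∀ k l, ‖inner ℂ (B k) (C l)‖ ≤ c := fun k l =>
    hc.2 ⟨k, l, by rw [ip_eq_inner, hB, hC]⟩
  -- If every overlap vanished, Parseval would give `‖C l‖ = 0`.
  have hc0 : 0 < c := by
    by_contra! hneg
    have hzero : ∀ k, inner ℂ (B k) (C ⟨0, hd⟩) = 0 := fun k =>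
      norm_le_zero_iff.1 ((hle k _).trans hneg)
    have hsum := B.sum_sq_norm_inner_right (C ⟨0, hd⟩)
    simp [hzero] at hsum
  have key := sum_sq_mul_log_le B C hv hc0 hle
  simp only [shannonH, negMulLog_sq, ← Finset.mul_sum, ip_eq_inner, ← hB, ← hC, ← hv_def]
  linarith
end
end

section
/- Let B₁,…,B_m (m ≥ 2) be pairwise mutually unbiased bases of ℂ^{s²} constructed from mutually orthogonal Latin squares of order s. Then min over unit vectors ψ of (1/m) ∑_{t=1}^m H(B_t, ψ) equals (log s²)/2 = log s, with the minimum attained at the computational basis state |1,1⟩. -/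
/-!
The lower bound is the Maassen–Uffink inequality `H(A, ψ) + H(B, ψ) ≥ -2 log c` for two orthonormal
bases whose overlaps have modulus at most `c`, applied with `c = 1 / s` to cyclically
consecutive bases and averaged (`le_mean_of_pairwise`).  Writing `aⱼ = ⟪Aⱼ, ψ⟫` and `bₖ = ⟪Bₖ, ψ⟫`, consider the entire
function
`F z = ∑ k j, |bₖ| ^ z * |aⱼ| ^ z * (conj bₖ * ⟪Bₖ, Aⱼ⟫ * aⱼ)`.
It is bounded on the strip `0 ≤ re z ≤ 1`, has modulus at most `1` on `re z = 0` by Cauchy–Schwarz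
(there it is an inner product of two unit vectors) and at most `c` on `re z = 1` by the overlap
bound.  Hadamard's three lines theorem gives `re (F x) ≤ c ^ x` on `[0, 1]`; since `F 0 = 1`,
comparing derivatives at `0` gives `-(H(A, ψ) + H(B, ψ)) / 2 ≤ log c` (`maassen_uffink`).

A Latin square basis is orthonormal because each symbol class meets every row once and its `s` cells
carry every phase index exactly once, so inner products within a class are sums of powers of
a root of unity (`lsVec_orthonormal`).  For the state `|1,1⟩`, each basis has exactly `s` outcomes of
nonzero probability, each of probability `1 / s`, so its entropy is `log s` (`shannonH_e11`).
-/

open scoped BigOperators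

noncomputable section

/-- The root of unity `ω = e^{2πi/s}`. -/
def omg (s : ℕ) : ℂ := Complex.exp (2 * Real.pi * Complex.I / s)

/-- The basis vector `v_{t,ℓ}` of the Latin square basis: the uniform superposition
over cells of `L` containing symbol `ℓ`, with Fourier phases `ω^{t·r(i,j)}`. -/
def lsVec {s : ℕ} (L : Fin s → Fin s → Fin s) (r : Fin s × Fin s → Fin s) :
    Fin s × Fin s → (Fin s × Fin s → ℂ) :=
  fun tl p =>
    if L p.1 p.2 = tl.2 then
      (omg s) ^ ((tl.1 : ℕ) * (r p : ℕ)) / (Real.sqrt s : ℂ)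
    else 0

/-- The computational basis state `|1,1⟩` of `ℂ^s ⊗ ℂ^s`. -/
def e11 (s : ℕ) [NeZero s] : Fin s × Fin s → ℂ :=
  fun p => if p = (0, 0) then 1 else 0

/-! ### The Maassen–Uffink inequality -/

open Complex in
/-- The Maassen–Uffink function `F`; `|b| ^ z` is written as `exp (z * log |b|)`.  The convention
`log 0 = 0` makes this factor `1` rather than `0` when `b = 0`, which is harmless because the
remaining factor then vanishes. -/
def muFun {E ι : Type*} [Fintype ι] [NormedAddCommGroup E] [InnerProductSpace ℂ E]
    (A B : OrthonormalBasis ι ℂ E) (ψ : E) (z : ℂ) : ℂ :=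
  ∑ k, ∑ j, exp (z * ((Real.log ‖inner ℂ (B k) ψ‖ + Real.log ‖inner ℂ (A j) ψ‖ : ℝ) : ℂ)) *
    (inner ℂ ψ (B k) * inner ℂ (B k) (A j) * inner ℂ (A j) ψ)

section MaassenUffink

variable {E ι : Type*} [Fintype ι] [NormedAddCommGroup E] [InnerProductSpace ℂ E]
  (A B : OrthonormalBasis ι ℂ E) (ψ : E)

theorem muFun_zero (hψ : ‖ψ‖ = 1) : muFun A B ψ 0 = 1 := by
  have h (k : ι) : ∑ j, inner ℂ ψ (B k) * inner ℂ (B k) (A j) * inner ℂ (A j) ψ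
      = inner ℂ ψ (B k) * inner ℂ (B k) ψ := by
    simp_rw [mul_assoc]
    rw [← Finset.mul_sum, A.sum_inner_mul_inner]
  simp only [muFun, zero_mul, Complex.exp_zero, one_mul, h]
  rw [B.sum_inner_mul_inner, inner_self_eq_norm_sq_to_K, hψ]
  simp

theorem norm_sum_smul_orthonormalBasis (c : ι → ℂ) :
    ‖∑ i, c i • A i‖ ^ 2 = ∑ i, ‖c i‖ ^ 2 := by
  rw [← A.sum_sq_norm_inner_right]
  simp only [A.orthonormal.inner_right_fintype]

/-- Multiplying the coefficients of a unit vector by imaginary powers keeps it a unit vector. -/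
theorem norm_sum_phase_smul (hψ : ‖ψ‖ = 1) (w : ℂ) (hw : w.re = 0) :
    ‖∑ i, (Complex.exp (w * (Real.log ‖inner ℂ (A i) ψ‖ : ℝ)) * inner ℂ (A i) ψ) • A i‖ = 1 := by
  rw [← sq_eq_sq₀ (norm_nonneg _) zero_le_one, norm_sum_smul_orthonormalBasis]
  simp only [norm_mul, Complex.norm_exp, Complex.re_mul_ofReal, hw, zero_mul, Real.exp_zero,
    one_mul]
  rw [A.sum_sq_norm_inner_right, hψ]

/-- On `re z = 0` the function is the inner product of two unit vectors. -/
theorem norm_muFun_le_one (hψ : ‖ψ‖ = 1) (z : ℂ) (hz : z.re = 0) : ‖muFun A B ψ z‖ ≤ 1 := by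
  have h : muFun A B ψ z = inner ℂ
      (∑ k, (Complex.exp ((starRingEnd ℂ) z * (Real.log ‖inner ℂ (B k) ψ‖ : ℝ))
        * inner ℂ (B k) ψ) • B k)
      (∑ j, (Complex.exp (z * (Real.log ‖inner ℂ (A j) ψ‖ : ℝ)) * inner ℂ (A j) ψ) • A j) := by
    rw [sum_inner]
    simp_rw [inner_sum, inner_smul_left, inner_smul_right]
    refine Finset.sum_congr rfl fun k _ => Finset.sum_congr rfl fun j _ => ?_
    rw [map_mul, ← Complex.exp_conj, map_mul, Complex.conj_conj, Complex.conj_ofReal,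
      inner_conj_symm, Complex.ofReal_add, mul_add, Complex.exp_add]
    ring
  rw [h]
  refine (norm_inner_le_norm _ _).trans ?_
  rw [norm_sum_phase_smul B ψ hψ _ (by simpa using hz), norm_sum_phase_smul A ψ hψ _ hz, one_mul]

/-- On `re z = 1` the weights are `|bₖ|² |aⱼ|²`, which sum to `1`, so the overlap bound survives. -/
theorem norm_muFun_le_const (hψ : ‖ψ‖ = 1) {c : ℝ} (hAB : ∀ j k, ‖inner ℂ (B k) (A j)‖ ≤ c)
    (z : ℂ) (hz : z.re = 1) : ‖muFun A B ψ z‖ ≤ c := by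
  have hexp (x : ℝ) (hx : 0 ≤ x) : Real.exp (Real.log x) * x = x ^ 2 := by
    rcases hx.eq_or_lt with rfl | hx
    · simp
    · rw [Real.exp_log hx, sq]
  calc ‖muFun A B ψ z‖
      ≤ ∑ k, ∑ j, c * (‖inner ℂ (B k) ψ‖ ^ 2 * ‖inner ℂ (A j) ψ‖ ^ 2) := by
        refine (norm_sum_le _ _).trans (Finset.sum_le_sum fun k _ =>
          (norm_sum_le _ _).trans (Finset.sum_le_sum fun j _ => ?_))
        rw [norm_mul, Complex.norm_exp, Complex.re_mul_ofReal, hz, one_mul, Real.exp_add,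
          norm_mul, norm_mul, norm_inner_symm ψ (B k), ← hexp _ (norm_nonneg _),
          ← hexp _ (norm_nonneg (inner ℂ (A j) ψ))]
        calc _ = ‖inner ℂ (B k) (A j)‖ * (Real.exp (Real.log ‖inner ℂ (B k) ψ‖)
                * ‖inner ℂ (B k) ψ‖ * (Real.exp (Real.log ‖inner ℂ (A j) ψ‖)
                * ‖inner ℂ (A j) ψ‖)) := by ring
          _ ≤ _ := mul_le_mul_of_nonneg_right (hAB j k) (by positivity)
    _ = c := by
        simp_rw [← Finset.mul_sum]
        rw [← Finset.sum_mul, A.sum_sq_norm_inner_right, B.sum_sq_norm_inner_right, hψ]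
        simp

theorem bddAbove_muFun : BddAbove
    ((norm ∘ muFun A B ψ) '' Complex.HadamardThreeLines.verticalClosedStrip 0 1) := by
  refine ⟨∑ k, ∑ j, Real.exp |Real.log ‖inner ℂ (B k) ψ‖ + Real.log ‖inner ℂ (A j) ψ‖| *
    ‖inner ℂ ψ (B k) * inner ℂ (B k) (A j) * inner ℂ (A j) ψ‖, ?_⟩
  rintro _ ⟨z, ⟨h0, h1⟩, rfl⟩
  refine (norm_sum_le _ _).trans (Finset.sum_le_sum fun k _ =>
    (norm_sum_le _ _).trans (Finset.sum_le_sum fun j _ => ?_))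
  rw [norm_mul, Complex.norm_exp, Complex.re_mul_ofReal]
  gcongr
  refine (le_abs_self _).trans ?_
  rw [abs_mul, abs_of_nonneg h0]
  exact mul_le_of_le_one_left (abs_nonneg _) h1

theorem hasDerivAt_muFun (z : ℂ) : HasDerivAt (muFun A B ψ)
    (∑ k, ∑ j, Complex.exp
        (z * ((Real.log ‖inner ℂ (B k) ψ‖ + Real.log ‖inner ℂ (A j) ψ‖ : ℝ) : ℂ)) *
      ((Real.log ‖inner ℂ (B k) ψ‖ + Real.log ‖inner ℂ (A j) ψ‖ : ℝ) : ℂ) *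
      (inner ℂ ψ (B k) * inner ℂ (B k) (A j) * inner ℂ (A j) ψ)) z := by
  refine HasDerivAt.fun_sum fun k _ => HasDerivAt.fun_sum fun j _ => ?_
  exact ((hasDerivAt_mul_const _).cexp).mul_const _

theorem negMulLog_norm_sq (x : ℝ) : Real.negMulLog (x ^ 2) = -2 * (Real.log x * x ^ 2) := by
  rw [Real.negMulLog, Real.log_pow]
  push_cast
  ring

/-- The derivative of the Maassen–Uffink function at `0` is minus half the entropy sum. -/
theorem hasDerivAt_muFun_zero : HasDerivAt (muFun A B ψ)
    ((-(∑ j, Real.negMulLog (‖inner ℂ (A j) ψ‖ ^ 2) +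
      ∑ k, Real.negMulLog (‖inner ℂ (B k) ψ‖ ^ 2)) / 2 : ℝ) : ℂ) 0 := by
  convert hasDerivAt_muFun A B ψ 0 using 1
  simp only [zero_mul, Complex.exp_zero, one_mul, Complex.ofReal_add, add_mul,
    Finset.sum_add_distrib]
  have hsq (C : OrthonormalBasis ι ℂ E) (k : ι) :
      inner ℂ ψ (C k) * inner ℂ (C k) ψ = ((‖inner ℂ (C k) ψ‖ ^ 2 : ℝ) : ℂ) := by
    rw [← inner_conj_symm ψ (C k), Complex.conj_mul', Complex.ofReal_pow]
  have h1 : ∑ k, ∑ j, ((Real.log ‖inner ℂ (B k) ψ‖ : ℝ) : ℂ) *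
      (inner ℂ ψ (B k) * inner ℂ (B k) (A j) * inner ℂ (A j) ψ)
      = ((∑ k, Real.log ‖inner ℂ (B k) ψ‖ * ‖inner ℂ (B k) ψ‖ ^ 2 : ℝ) : ℂ) := by
    rw [Complex.ofReal_sum]
    refine Finset.sum_congr rfl fun k _ => ?_
    simp_rw [mul_assoc]
    rw [← Finset.mul_sum, ← Finset.mul_sum, A.sum_inner_mul_inner, hsq, Complex.ofReal_mul]
  have h2 : ∑ k, ∑ j, ((Real.log ‖inner ℂ (A j) ψ‖ : ℝ) : ℂ) *
      (inner ℂ ψ (B k) * inner ℂ (B k) (A j) * inner ℂ (A j) ψ)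
      = ((∑ j, Real.log ‖inner ℂ (A j) ψ‖ * ‖inner ℂ (A j) ψ‖ ^ 2 : ℝ) : ℂ) := by
    rw [Complex.ofReal_sum, Finset.sum_comm]
    refine Finset.sum_congr rfl fun j _ => ?_
    rw [← Finset.mul_sum, ← Finset.sum_mul, B.sum_inner_mul_inner, hsq, Complex.ofReal_mul]
  rw [h1, h2, ← Complex.ofReal_add]
  congr 1
  simp_rw [negMulLog_norm_sq, ← Finset.mul_sum]
  ring

/-- The Maassen–Uffink entropic uncertainty relation. -/
theorem maassen_uffink_s6 (hψ : ‖ψ‖ = 1) {c : ℝ} (hc : 0 < c)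
    (hAB : ∀ j k, ‖inner ℂ (B k) (A j)‖ ≤ c) :
    -2 * Real.log c ≤ ∑ j, Real.negMulLog (‖inner ℂ (A j) ψ‖ ^ 2) +
      ∑ k, Real.negMulLog (‖inner ℂ (B k) ψ‖ ^ 2) := by
  have hbound (x : ℝ) (hx : x ∈ Set.Icc (0 : ℝ) 1) : (muFun A B ψ x).re ≤ c ^ x := by
    have hdiff : Differentiable ℂ (muFun A B ψ) :=
      fun z => (hasDerivAt_muFun A B ψ z).differentiableAt
    have h := Complex.HadamardThreeLines.norm_le_interp_of_mem_verticalClosedStrip₀₁'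
      (muFun A B ψ) (z := (x : ℂ)) (a := 1) (b := c) (by simpa [Complex.HadamardThreeLines.verticalClosedStrip] using hx) hdiff.diffContOnCl
      (bddAbove_muFun A B ψ) (fun z hz => norm_muFun_le_one A B ψ hψ z hz)
      (fun z hz => norm_muFun_le_const A B ψ hψ hAB z hz)
    simp only [Complex.ofReal_re, Real.one_rpow, one_mul] at h
    exact (Complex.re_le_norm _).trans h
  have hF : HasDerivAt (fun x : ℝ => (muFun A B ψ x).re) _ 0 :=
    HasDerivAt.real_of_complex (by exact_mod_cast hasDerivAt_muFun_zero A B ψ)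
  have hD := ((Real.hasStrictDerivAt_const_rpow hc 0).hasDerivAt).sub hF
  have hlim := hD.tendsto_slope_zero_right
  -- `c ^ x - re (F x)` vanishes at `0` and is nonnegative on `[0, 1]`.
  have hnn := ge_of_tendsto hlim (b := 0) (by
    filter_upwards [Ioo_mem_nhdsGT (zero_lt_one' ℝ)] with x hx
    have h := hbound x ⟨hx.1.le, hx.2.le⟩
    have hx' : 0 ≤ x⁻¹ := inv_nonneg.2 hx.1.le
    simp only [Pi.sub_apply, zero_add, Complex.ofReal_zero, muFun_zero A B ψ hψ, Real.rpow_zero,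
      Complex.one_re, sub_self, sub_zero, smul_eq_mul]
    exact mul_nonneg hx' (sub_nonneg.2 h))
  simp only [Complex.ofReal_re, Real.rpow_zero, one_mul] at hnn
  linarith

end MaassenUffink

/-! ### Bases from Latin squares -/

section LatinSquare

variable {s : ℕ} {L : Fin s → Fin s → Fin s} {r : Fin s × Fin s → Fin s}

/-- Summing over the cells of one symbol a function of the phase index amounts to summing over
all phase indices. -/
theorem sum_symbol_class (hrow : ∀ i, Function.Bijective (L i))
    (hr : ∀ ℓ : Fin s, Set.InjOn r {p | L p.1 p.2 = ℓ}) (ℓ : Fin s) (h : Fin s → ℂ) :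
    ∑ p : Fin s × Fin s, (if L p.1 p.2 = ℓ then h (r p) else 0) = ∑ x, h x := by
  choose g hg using fun i => (hrow i).2 ℓ
  have hinj : Function.Injective fun i => r (i, g i) := fun i i' hii' =>
    congrArg Prod.fst (hr ℓ (hg i) (hg i') hii')
  rw [← (Finite.injective_iff_bijective.1 hinj).sum_comp h, Fintype.sum_prod_type]
  refine Finset.sum_congr rfl fun i _ => ?_
  rw [Finset.sum_eq_single (g i)]
  · rw [if_pos (hg i)]
  · intro j _ hj
    exact if_neg fun hL => hj ((hrow i).1 (hL.trans (hg i).symm))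
  · simp

theorem omg_isPrimitiveRoot (hs : s ≠ 0) : IsPrimitiveRoot (omg s) s :=
  Complex.isPrimitiveRoot_exp s hs

theorem norm_omg (hs : s ≠ 0) : ‖omg s‖ = 1 := (omg_isPrimitiveRoot hs).norm'_eq_one hs

theorem sum_omg_phases (hs : s ≠ 0) (t t' : Fin s) :
    ∑ x : Fin s, (starRingEnd ℂ) (omg s ^ ((t : ℕ) * (x : ℕ))) * omg s ^ ((t' : ℕ) * (x : ℕ))
      = if t = t' then (s : ℂ) else 0 := by
  have hζ := omg_isPrimitiveRoot hs
  have hconj : (starRingEnd ℂ) (omg s ^ (t : ℕ)) * omg s ^ (t : ℕ) = 1 := by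
    rw [Complex.conj_mul', norm_pow, norm_omg hs]
    simp
  set ξ : ℂ := (starRingEnd ℂ) (omg s ^ (t : ℕ)) * omg s ^ (t' : ℕ) with hξ
  have hsum : ∑ x : Fin s, (starRingEnd ℂ) (omg s ^ ((t : ℕ) * (x : ℕ))) *
      omg s ^ ((t' : ℕ) * (x : ℕ)) = ∑ x ∈ Finset.range s, ξ ^ x := by
    rw [← Fin.sum_univ_eq_sum_range]
    refine Finset.sum_congr rfl fun x _ => ?_
    rw [hξ, mul_pow, pow_mul, pow_mul, map_pow]
  rw [hsum]
  split_ifs with h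
  · subst h
    rw [show ξ = 1 from hconj]
    simp
  · have hne : ξ ≠ 1 := by
      intro h1
      have hcancel : omg s ^ (t : ℕ) * ξ = omg s ^ (t' : ℕ) := by
        rw [hξ, ← mul_assoc, mul_comm (omg s ^ (t : ℕ)), hconj, one_mul]
      rw [h1, mul_one] at hcancel
      exact h (Fin.ext (hζ.pow_inj t.2 t'.2 hcancel))
    have hpow : ξ ^ s = 1 := by
      rw [hξ, mul_pow, ← map_pow, pow_right_comm, pow_right_comm (omg s) t' s, hζ.pow_eq_one]
      simp
    rw [geom_sum_eq hne, hpow, sub_self, zero_div]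

theorem ip_lsVec (hs : s ≠ 0) (hrow : ∀ i, Function.Bijective (L i))
    (hr : ∀ ℓ : Fin s, Set.InjOn r {p | L p.1 p.2 = ℓ}) (k k' : Fin s × Fin s) :
    ip (lsVec L r k) (lsVec L r k') = if k = k' then 1 else 0 := by
  obtain ⟨t, ℓ⟩ := k
  obtain ⟨t', ℓ'⟩ := k'
  by_cases hℓ : ℓ = ℓ'
  · subst hℓ
    have hsq : ((Real.sqrt s : ℝ) : ℂ) * (Real.sqrt s : ℝ) = s := by
      rw [← Complex.ofReal_mul, Real.mul_self_sqrt (Nat.cast_nonneg s), Complex.ofReal_natCast]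
    have hs' : (s : ℂ) ≠ 0 := Nat.cast_ne_zero.2 hs
    calc ip (lsVec L r (t, ℓ)) (lsVec L r (t', ℓ))
        = ∑ p : Fin s × Fin s, (if L p.1 p.2 = ℓ then
            ((starRingEnd ℂ) (omg s ^ ((t : ℕ) * (r p : ℕ))) *
              omg s ^ ((t' : ℕ) * (r p : ℕ))) / s else 0) := by
          refine Finset.sum_congr rfl fun p _ => ?_
          simp only [lsVec]
          split_ifs
          · rw [map_div₀, Complex.conj_ofReal, div_mul_div_comm, hsq]
          · simp
      _ = (if t = t' then (s : ℂ) else 0) / s := by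
          rw [sum_symbol_class hrow hr ℓ (fun x => ((starRingEnd ℂ)
            (omg s ^ ((t : ℕ) * (x : ℕ))) * omg s ^ ((t' : ℕ) * (x : ℕ))) / s),
            ← Finset.sum_div, sum_omg_phases hs]
      _ = _ := by
          by_cases h : t = t' <;> simp [h, hs']
  · rw [if_neg fun h => hℓ (congrArg Prod.snd h)]
    refine Finset.sum_eq_zero fun p _ => ?_
    simp only [lsVec]
    by_cases h : L p.1 p.2 = ℓ
    · rw [if_neg (fun h' => hℓ (h.symm.trans h')), mul_zero]
    · rw [if_neg h, map_zero, zero_mul]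

theorem inner_toLp_eq_ip {ι : Type*} [Fintype ι] (φ ψ : ι → ℂ) :
    inner ℂ (WithLp.toLp 2 φ : EuclideanSpace ℂ ι) (WithLp.toLp 2 ψ) = ip φ ψ := by
  simp only [PiLp.inner_apply, RCLike.inner_apply, ip]
  exact Finset.sum_congr rfl fun i _ => mul_comm _ _

theorem lsVec_orthonormal (hs : s ≠ 0) (hrow : ∀ i, Function.Bijective (L i))
    (hr : ∀ ℓ : Fin s, Set.InjOn r {p | L p.1 p.2 = ℓ}) :
    Orthonormal ℂ fun k => (WithLp.toLp 2 (lsVec L r k) : EuclideanSpace ℂ (Fin s × Fin s)) := by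
  rw [orthonormal_iff_ite]
  intro k k'
  rw [inner_toLp_eq_ip, ip_lsVec hs hrow hr]

/-- The vectors `lsVec L r` form an orthonormal basis of `ℂ^{s²}`, by counting dimensions. -/
theorem exists_orthonormalBasis_lsVec (hs : s ≠ 0) (hrow : ∀ i, Function.Bijective (L i))
    (hr : ∀ ℓ : Fin s, Set.InjOn r {p | L p.1 p.2 = ℓ}) :
    ∃ b : OrthonormalBasis (Fin s × Fin s) ℂ (EuclideanSpace ℂ (Fin s × Fin s)),
      ∀ k, b k = WithLp.toLp 2 (lsVec L r k) := by
  have h := lsVec_orthonormal hs hrow hr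
  refine ⟨OrthonormalBasis.mk h
    (h.linearIndependent.span_eq_top_of_card_eq_finrank' (by simp)).ge, fun k => ?_⟩
  rw [OrthonormalBasis.coe_mk]

theorem shannonH_e11 [NeZero s] : shannonH (lsVec L r) (e11 s) = Real.log s := by
  have hs0 : s ≠ 0 := NeZero.ne s
  have hs : (s : ℝ) ≠ 0 := Nat.cast_ne_zero.2 hs0
  have hip (k : Fin s × Fin s) :
      ‖ip (lsVec L r k) (e11 s)‖ ^ 2 = if L 0 0 = k.2 then (s : ℝ)⁻¹ else 0 := by
    have : ip (lsVec L r k) (e11 s) = (starRingEnd ℂ) (lsVec L r k (0, 0)) := by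
      simp [ip, e11]
    rw [this, RCLike.norm_conj]
    simp only [lsVec]
    split_ifs
    · rw [norm_div, norm_pow, norm_omg hs0, one_pow, Complex.norm_real, Real.norm_eq_abs,
        abs_of_nonneg (Real.sqrt_nonneg _), div_pow, Real.sq_sqrt (Nat.cast_nonneg s), one_pow,
        one_div]
    · simp
  simp only [shannonH, hip, apply_ite Real.negMulLog, Real.negMulLog_zero,
    Fintype.sum_prod_type, Finset.sum_ite_eq, Finset.mem_univ, if_true, Finset.sum_const,
    Finset.card_univ, Fintype.card_fin, nsmul_eq_mul]
  rw [Real.negMulLog, Real.log_inv]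
  field_simp

end LatinSquare

/-! ### Averaging over pairs and the tight bound -/

/-- If every two distinct terms of a finite family have sum at least `2 * a`, then the mean of the
family is at least `a`. -/
theorem le_mean_of_pairwise {m : ℕ} (hm : 2 ≤ m) (H : Fin m → ℝ) (a : ℝ)
    (h : ∀ t t', t ≠ t' → 2 * a ≤ H t + H t') : a ≤ (1 / (m : ℝ)) * ∑ t, H t := by
  have : NeZero m := ⟨by omega⟩
  have hm0 : (0 : ℝ) < m := by exact_mod_cast (by omega : 0 < m)
  -- Pair every index with its cyclic successor.
  have hsum : ∑ t : Fin m, 2 * a ≤ ∑ t : Fin m, (H t + H (t + 1)) :=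
    Finset.sum_le_sum fun t _ => h t (t + 1) fun ht => by
      have h1 : (1 : Fin m) = 0 := by simpa using ht.symm
      have h2 := congrArg Fin.val h1
      rw [Fin.val_one', Fin.val_zero, Nat.mod_eq_of_lt (by omega)] at h2
      omega
  rw [Finset.sum_add_distrib, show ∑ t, H (t + 1) = ∑ t, H t from
    Equiv.sum_comp (Equiv.addRight (1 : Fin m)) H] at hsum
  simp only [Finset.sum_const, Finset.card_univ, Fintype.card_fin, nsmul_eq_mul] at hsum
  rw [one_div, inv_mul_eq_div, le_div_iff₀ hm0]
  linarith

/-- For any family of `m ≥ 2` pairwise mutually unbiased bases of `ℂ^{s²}` coming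
from mutually orthogonal Latin squares, the minimum over unit vectors of the average
measurement entropy is exactly `(log s²)/2 = log s`, attained at `|1,1⟩`. -/
theorem latin_square_mub_tight_uncertainty (s m : ℕ) [NeZero s] (hm : 2 ≤ m)
    (L : Fin m → Fin s → Fin s → Fin s)
    (hrow : ∀ t i, Function.Bijective (L t i))
    (hcol : ∀ t j, Function.Bijective (fun i => L t i j))
    (horth : ∀ t t', t ≠ t' → ∀ u v : Fin s, ∃! p : Fin s × Fin s,
      L t p.1 p.2 = u ∧ L t' p.1 p.2 = v)
    (r : Fin m → Fin s × Fin s → Fin s)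
    (hr : ∀ t, ∀ ℓ : Fin s, Set.InjOn (r t) {p | L t p.1 p.2 = ℓ})
    (hmub : ∀ t t', t ≠ t' → ∀ kl kl' : Fin s × Fin s,
      ‖ip (lsVec (L t) (r t) kl) (lsVec (L t') (r t') kl')‖ = 1 / Real.sqrt ((s : ℝ) ^ 2)) :
    ((1 / (m : ℝ)) * ∑ t, shannonH (lsVec (L t) (r t)) (e11 s)
        = Real.log ((s : ℝ) ^ 2) / 2) ∧
    (∀ ψ : Fin s × Fin s → ℂ, (∑ p, ‖ψ p‖ ^ 2 = 1) →
      (1 / (m : ℝ)) * ∑ t, shannonH (lsVec (L t) (r t)) ψ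
        ≥ Real.log ((s : ℝ) ^ 2) / 2) := by
  have hs : s ≠ 0 := NeZero.ne s
  have hm0 : (m : ℝ) ≠ 0 := Nat.cast_ne_zero.2 (by omega)
  have hlog : Real.log ((s : ℝ) ^ 2) / 2 = Real.log s := by
    rw [Real.log_pow]
    push_cast
    ring
  rw [hlog]
  refine ⟨?_, fun ψ hψ => ?_⟩
  · simp only [shannonH_e11, Finset.sum_const, Finset.card_univ, Fintype.card_fin, nsmul_eq_mul]
    field_simp
  · choose b hb using fun t => exists_orthonormalBasis_lsVec hs (hrow t) (hr t)
    refine le_mean_of_pairwise hm _ _ fun t t' htt' => ?_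
    have hψ' : ‖(WithLp.toLp 2 ψ : EuclideanSpace ℂ (Fin s × Fin s))‖ = 1 := by
      rw [EuclideanSpace.norm_eq, Real.sqrt_eq_one]
      exact hψ
    have h := maassen_uffink_s6 (b t) (b t') (WithLp.toLp 2 ψ) hψ'
      (c := (s : ℝ)⁻¹) (inv_pos.2 (by exact_mod_cast Nat.pos_of_ne_zero hs)) (fun j k => by
        rw [hb, hb, inner_toLp_eq_ip, hmub t' t htt'.symm, Real.sqrt_sq (Nat.cast_nonneg s),
          one_div])
    simp only [hb, inner_toLp_eq_ip, Real.log_inv] at h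
    simp only [shannonH]
    linarith
end
end

section
/- Let B₁,…,B_m be MUBs of ℂ^d based on generalized Pauli matrices in prime power dimension d = p^N, and consider the ensemble in which the state |b^t_k⟩⟨b^t_k| is drawn with uniform probability 1/(dm). Then the accessible information of this ensemble equals log d − (1/m) min_ψ ∑_{t=1}^m H(B_t, ψ), where the minimum is over unit vectors ψ. -/
/-!
Write `η = Real.negMulLog`, `d = p ^ N`. For a measurement with outcome weights
`w (t, k) i = ⟨b^t_k| M_i |b^t_k⟩` and `τ i = tr M_i`, expanding `η (x * y) = y * η x + x * η y`
turns the mutual information into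
`log d - 1 / (d m) * ∑ i, (∑ t, ∑ k, η (w (t, k) i) - m * η (τ i))` (`mutualInfo_eq`).

*Upper bound.* A positive semidefinite `M_i` is a sum of rank-one terms `|ν_j⟩⟨ν_j|`
(`exists_rankOne`). By concavity of `η`, the bracket is at least `τ i * h` whenever `h` is a lower
bound for `∑ t, H(B_t, φ)` over unit vectors (`entropy_lower`); since `∑ i, τ i = d`, this gives
`I ≤ log d - h / m`.

*Attainment.* The Weyl translates `P ψ` of a unit vector `ψ` form, after division by `d`, a POVM
(`sum_pv_mul_star`). Pauli strings commute up to a scalar (`pv_comm`), so `P` maps a common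
eigenvector of a class of strings to another one, hence permutes each `B_t` up to phases and
`H(B_t, P ψ) = H(B_t, ψ)` (`shannonH_pv`). Therefore this POVM gives exactly
`log d - (1 / m) * ∑ t, H(B_t, ψ)`. Comparing suprema and infima, no minimizer is needed.
-/

open scoped BigOperators ComplexOrder

noncomputable section

/-- Classical mutual information `H(P_A) + H(P_B) - H(P_{AB})` of a joint
(sub)distribution `q` on `A × R`. -/
def mutualInfo {A R : Type*} [Fintype A] [Fintype R] (q : A → R → ℝ) : ℝ :=
  (∑ a, Real.negMulLog (∑ i, q a i)) + (∑ i, Real.negMulLog (∑ a, q a i))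
    - ∑ a, ∑ i, Real.negMulLog (q a i)

/-- A finite family of matrices is a POVM if all elements are positive semidefinite
and they sum to the identity. -/
def IsPOVM {ι : Type*} [Fintype ι] [DecidableEq ι] {r : ℕ}
    (M : Fin r → Matrix ι ι ℂ) : Prop :=
  (∀ i, (M i).PosSemidef) ∧ ∑ i, M i = 1

/-- The set of classical mutual informations obtainable by measuring the ensemble
`{prior a, |v a⟩⟨v a|}` with some POVM; its supremum is the accessible information. -/
def accInfoSet {ι A : Type*} [Fintype ι] [DecidableEq ι] [Fintype A]
    (prior : A → ℝ) (v : A → ι → ℂ) : Set ℝ :=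
  {x | ∃ (r : ℕ) (M : Fin r → Matrix ι ι ℂ), IsPOVM M ∧
    x = mutualInfo (fun a i => prior a * (ip (v a) (Matrix.mulVec (M i) (v a))).re)}

/-- The generalized Pauli string `X^{a₁}Z^{b₁} ⊗ ⋯ ⊗ X^{a_N}Z^{b_N}` on `(ℂ^p)^{⊗N}`. -/
def pauliString (p N : ℕ) [NeZero p] (a b : Fin N → Fin p) :
    Matrix (Fin N → Fin p) (Fin N → Fin p) ℂ :=
  Matrix.of fun x y => ∏ j,
    if x j = y j + a j then Complex.exp (2 * Real.pi * Complex.I / p) ^ ((b j : ℕ) * (y j : ℕ))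
    else 0

/-! ### Orthonormal bases and rank-one decompositions -/

lemma ip_self_re {ι : Type*} [Fintype ι] (φ : ι → ℂ) :
    ip φ φ = ((∑ i, ‖φ i‖ ^ 2 : ℝ) : ℂ) := by
  unfold ip
  push_cast
  exact Finset.sum_congr rfl fun i _ => Complex.conj_mul' (φ i)

lemma ip_smul_right {ι : Type*} [Fintype ι] (φ ψ : ι → ℂ) (z : ℂ) :
    ip φ (z • ψ) = z * ip φ ψ := by
  unfold ip
  rw [Finset.mul_sum]
  exact Finset.sum_congr rfl fun i _ => by simp [mul_left_comm]

lemma ip_smul_left {ι : Type*} [Fintype ι] (φ ψ : ι → ℂ) (z : ℂ) :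
    ip (z • φ) ψ = (starRingEnd ℂ) z * ip φ ψ := by
  unfold ip
  rw [Finset.mul_sum]
  exact Finset.sum_congr rfl fun i _ => by simp [mul_assoc]

/-- An orthonormal family indexed by the index set of the space itself is a basis, so Parseval's
identity holds: a left inverse of a square matrix is a right inverse. -/
lemma parseval {ι : Type*} [Fintype ι] [DecidableEq ι] (b : ι → ι → ℂ)
    (h : ∀ k l, ip (b k) (b l) = if k = l then 1 else 0) (ψ : ι → ℂ) :
    ∑ k, ‖ip (b k) ψ‖ ^ 2 = ∑ i, ‖ψ i‖ ^ 2 := by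
  let U : Matrix ι ι ℂ := Matrix.of fun k i => (starRingEnd ℂ) (b k i)
  have hU : U * U.conjTranspose = 1 := by
    ext k l
    rw [Matrix.mul_apply, Matrix.one_apply, ← h k l]
    simp [U, ip, Matrix.conjTranspose_apply]
  have hU' : U.conjTranspose * U = 1 := mul_eq_one_comm.mp hU
  have hip : ∀ k, ip (b k) ψ = Matrix.mulVec U ψ k := fun k => rfl
  have key : ip (Matrix.mulVec U ψ) (Matrix.mulVec U ψ) = ip ψ ψ := by
    change star (Matrix.mulVec U ψ) ⬝ᵥ (Matrix.mulVec U ψ) = star ψ ⬝ᵥ ψ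
    rw [Matrix.star_mulVec, ← Matrix.dotProduct_mulVec, Matrix.mulVec_mulVec, hU',
      Matrix.one_mulVec]
  rw [ip_self_re, ip_self_re] at key
  simp only [hip]
  exact_mod_cast key

/-- The quadratic form of a positive semidefinite matrix `Nᴴ N` is a sum of rank-one forms, the
vectors being the conjugated rows of `N`. -/
lemma exists_rankOne {ι : Type*} [Fintype ι] [DecidableEq ι] (M : Matrix ι ι ℂ)
    (hM : M.PosSemidef) : ∃ ν : ι → ι → ℂ, ∀ v : ι → ℂ,
      (ip v (Matrix.mulVec M v)).re = ∑ j, ‖ip v (ν j)‖ ^ 2 := by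
  obtain ⟨A, rfl⟩ : ∃ A : Matrix ι ι ℂ, M = A.conjTranspose * A := by
    open scoped MatrixOrder in
    exact CStarAlgebra.nonneg_iff_eq_star_mul_self.mp hM.nonneg
  refine ⟨fun j i => (starRingEnd ℂ) (A j i), fun v => ?_⟩
  have h1 : ∀ j, ip v (fun i => (starRingEnd ℂ) (A j i))
      = (starRingEnd ℂ) (Matrix.mulVec A v j) := by
    intro j
    simp [ip, Matrix.mulVec, dotProduct, mul_comm]
  have h2 : ip v (Matrix.mulVec (A.conjTranspose * A) v)
      = ip (Matrix.mulVec A v) (Matrix.mulVec A v) := by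
    change star v ⬝ᵥ _ = star (Matrix.mulVec A v) ⬝ᵥ (Matrix.mulVec A v)
    rw [Matrix.star_mulVec, ← Matrix.dotProduct_mulVec, Matrix.mulVec_mulVec]
  rw [h2, ip_self_re, Complex.ofReal_re]
  exact Finset.sum_congr rfl fun j _ => by rw [h1, RCLike.norm_conj]

lemma povm_row {ι : Type*} [Fintype ι] [DecidableEq ι] {r : ℕ} (M : Fin r → Matrix ι ι ℂ)
    (hM : IsPOVM M) (v : ι → ℂ) (hv : ip v v = 1) :
    ∑ i, (ip v (Matrix.mulVec (M i) v)).re = 1 := by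
  have : ∑ i, ip v (Matrix.mulVec (M i) v) = 1 := by
    change ∑ i, star v ⬝ᵥ Matrix.mulVec (M i) v = 1
    rw [← dotProduct_sum, ← Matrix.sum_mulVec, hM.2, Matrix.one_mulVec]
    exact hv
  rw [← Complex.re_sum, this, Complex.one_re]

/-! ### Mutual information and the entropic upper bound -/

/-- Mutual information of a uniform ensemble of `m` bases with weights `w`, where the marginals
are `∑ i, w a i = 1` and `∑ k, w (t, k) i = τ i` (the latter independent of `t`). -/
lemma mutualInfo_eq {ι T R : Type*} [Fintype ι] [Fintype T] [Fintype R] (d m : ℝ)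
    (hd : 0 < d) (hm : 0 < m) (hT : (Fintype.card T : ℝ) = m) (hι : (Fintype.card ι : ℝ) = d)
    (w : T × ι → R → ℝ) (τ : R → ℝ) (h1 : ∀ a, ∑ i, w a i = 1)
    (hτ : ∀ i t, ∑ k, w (t, k) i = τ i) :
    ∑ i, τ i = d ∧
    mutualInfo (fun a i => 1 / (d * m) * w a i) = Real.log d
      - 1 / (d * m) * ∑ i, ((∑ a, Real.negMulLog (w a i)) - m * Real.negMulLog (τ i)) := by
  have hne : Nonempty T := by
    rw [← Fintype.card_pos_iff]
    rw [← hT] at hm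
    exact_mod_cast hm
  have hsum : ∑ i, τ i = d := by
    obtain ⟨t⟩ := hne
    simp_rw [← hτ _ t]
    rw [Finset.sum_comm]
    simp [h1, hι]
  refine ⟨hsum, ?_⟩
  have hcol : ∀ i, ∑ a, w a i = m * τ i := by
    intro i
    rw [Fintype.sum_prod_type]
    simp [hτ, hT]
  unfold mutualInfo
  have e1 : ∑ a : T × ι, Real.negMulLog (∑ i, 1 / (d * m) * w a i)
      = ∑ a : T × ι, Real.negMulLog (1 / (d * m)) :=
    Finset.sum_congr rfl fun a _ => by rw [← Finset.mul_sum, h1, mul_one]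
  have e2 : ∑ i, Real.negMulLog (∑ a, 1 / (d * m) * w a i)
      = Real.log d + 1 / d * ∑ i, Real.negMulLog (τ i) := by
    have : ∀ i, Real.negMulLog (∑ a, 1 / (d * m) * w a i)
        = τ i * Real.negMulLog (1 / d) + 1 / d * Real.negMulLog (τ i) := by
      intro i
      rw [← Finset.mul_sum, hcol, ← Real.negMulLog_mul]
      congr 1
      field_simp
    simp_rw [this]
    rw [Finset.sum_add_distrib, ← Finset.sum_mul, ← Finset.mul_sum, hsum]
    congr 1
    simp [Real.negMulLog, hd.ne']
  have e3 : ∑ a, ∑ i, Real.negMulLog (1 / (d * m) * w a i)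
      = ∑ a : T × ι, Real.negMulLog (1 / (d * m))
        + 1 / (d * m) * ∑ i, ∑ a, Real.negMulLog (w a i) := by
    simp_rw [Real.negMulLog_mul, Finset.sum_add_distrib, ← Finset.sum_mul, ← Finset.mul_sum]
    congr 1
    · simp [h1]
    · rw [Finset.sum_comm]
  rw [e1, e2, e3, Finset.sum_sub_distrib, ← Finset.mul_sum]
  field_simp
  ring

/-- Jensen step: the outcome weights of `∑ j, |ν j⟩⟨ν j|` inherit any lower bound `h` on the
entropy sum over unit vectors, scaled by the trace `τ`, up to the normalization term
`m * η(τ)`. -/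
lemma entropy_lower {ι T J : Type*} [Fintype ι] [DecidableEq ι] [Fintype T] [Fintype J]
    (B : T → ι → ι → ℂ) (horth : ∀ t, ∀ k l, ip (B t k) (B t l) = if k = l then 1 else 0)
    (h : ℝ) (hh : ∀ ψ : ι → ℂ, ∑ i, ‖ψ i‖ ^ 2 = 1 → h ≤ ∑ t, shannonH (B t) ψ)
    (ν : J → ι → ℂ) (τ : ℝ) (hτ : τ = ∑ j, ∑ i, ‖ν j i‖ ^ 2) :
    τ * h ≤ (∑ a : T × ι, Real.negMulLog (∑ j, ‖ip (B a.1 a.2) (ν j)‖ ^ 2))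
      - Fintype.card T * Real.negMulLog τ := by
  set s : J → ℝ := fun j => ∑ i, ‖ν j i‖ ^ 2 with hs
  have hs0 : ∀ j, 0 ≤ s j := fun j => Finset.sum_nonneg fun i _ => by positivity
  have hpar : ∀ t j, ∑ k, ‖ip (B t k) (ν j)‖ ^ 2 = s j := fun t j => parseval _ (horth t) _
  have hzero : ∀ t k j, s j = 0 → ‖ip (B t k) (ν j)‖ ^ 2 = 0 := by
    intro t k j hj
    rw [← hpar t j] at hj
    exact (Finset.sum_eq_zero_iff_of_nonneg (fun k _ => by positivity)).mp hj k
      (Finset.mem_univ _)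
  have hτ0 : 0 ≤ τ := hτ ▸ Finset.sum_nonneg fun j _ => hs0 j
  rcases hτ0.eq_or_lt with h0 | hpos
  · have hall : ∀ j, s j = 0 := fun j =>
      (Finset.sum_eq_zero_iff_of_nonneg (fun j _ => hs0 j)).mp (hτ.symm.trans h0.symm) j
        (Finset.mem_univ _)
    rw [← h0]
    simp [hzero _ _ _ (hall _)]
  have hw : ∀ t, ∑ k, ∑ j, ‖ip (B t k) (ν j)‖ ^ 2 = τ := by
    intro t
    rw [Finset.sum_comm, hτ]
    exact Finset.sum_congr rfl fun j _ => hpar t j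
  have jensen : ∀ a : T × ι,
      ∑ j, s j / τ * Real.negMulLog (‖ip (B a.1 a.2) (ν j)‖ ^ 2 / s j)
        ≤ Real.negMulLog ((∑ j, ‖ip (B a.1 a.2) (ν j)‖ ^ 2) / τ) := by
    intro a
    have := Real.concaveOn_negMulLog.le_map_sum (t := Finset.univ) (w := fun j => s j / τ)
      (p := fun j => ‖ip (B a.1 a.2) (ν j)‖ ^ 2 / s j)
      (fun j _ => div_nonneg (hs0 j) hτ0)
      (by rw [← Finset.sum_div, ← hτ, div_self hpos.ne'])
      (fun j _ => Set.mem_Ici.mpr (div_nonneg (by positivity) (hs0 j)))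
    simp only [smul_eq_mul] at this
    refine this.trans_eq ?_
    congr 1
    rw [Finset.sum_div]
    refine Finset.sum_congr rfl fun j _ => ?_
    rcases eq_or_ne (s j) 0 with hj | hj
    · rw [hzero _ _ _ hj, hj]
      simp
    · field_simp
  have hunit : ∀ j, s j * h ≤
      s j * ∑ a : T × ι, Real.negMulLog (‖ip (B a.1 a.2) (ν j)‖ ^ 2 / s j) := by
    intro j
    rcases (hs0 j).eq_or_lt with hj | hj
    · rw [← hj]
      simp
    refine mul_le_mul_of_nonneg_left ?_ hj.le
    have hn : ∀ z : ℂ, ‖((Real.sqrt (s j))⁻¹ : ℂ) * z‖ ^ 2 = ‖z‖ ^ 2 / s j := by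
      intro z
      rw [norm_mul, mul_pow, norm_inv, Complex.norm_real, inv_pow, Real.norm_eq_abs, sq_abs,
        Real.sq_sqrt hj.le]
      ring
    have := hh (((Real.sqrt (s j))⁻¹ : ℂ) • ν j) (by
      simp only [Pi.smul_apply, smul_eq_mul, hn]
      rw [← Finset.sum_div]
      exact div_self hj.ne')
    refine this.trans_eq ?_
    rw [Fintype.sum_prod_type]
    simp only [shannonH, ip_smul_right, hn]
  have hG : h ≤ ∑ a : T × ι,
      Real.negMulLog ((∑ j, ‖ip (B a.1 a.2) (ν j)‖ ^ 2) / τ) := by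
    refine le_trans ?_ (Finset.sum_le_sum fun a _ => jensen a)
    rw [Finset.sum_comm]
    have : h = ∑ j, s j * h / τ := by
      rw [← Finset.sum_div, ← Finset.sum_mul, ← hτ]
      field_simp
    rw [this]
    refine Finset.sum_le_sum fun j _ => ?_
    rw [← Finset.mul_sum, div_mul_eq_mul_div]
    exact div_le_div_of_nonneg_right (hunit j) hτ0
  have hexp : ∑ a : T × ι, Real.negMulLog (∑ j, ‖ip (B a.1 a.2) (ν j)‖ ^ 2)
      = Fintype.card T * Real.negMulLog τ + τ * ∑ a : T × ι,
        Real.negMulLog ((∑ j, ‖ip (B a.1 a.2) (ν j)‖ ^ 2) / τ) := by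
    have : ∀ x : ℝ, Real.negMulLog x = x / τ * Real.negMulLog τ + τ * Real.negMulLog (x / τ) := by
      intro x
      rw [← Real.negMulLog_mul, mul_div_cancel₀ _ hpos.ne']
    rw [Finset.sum_congr rfl fun a _ => this _, Finset.sum_add_distrib, ← Finset.sum_mul,
      ← Finset.mul_sum, ← Finset.sum_div, Fintype.sum_prod_type]
    simp only [hw]
    simp [hpos.ne']
  rw [hexp, add_sub_cancel_left]
  exact mul_le_mul_of_nonneg_left hG hτ0

/-! ### Action of the Pauli strings -/

/-- The primitive `p`-th root of unity `exp (2 * π * i / p)`. -/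
def om (p : ℕ) : ℂ := Complex.exp (2 * Real.pi * Complex.I / p)

/-- The character `y ↦ ω^{b · y}` of `(ℤ/p)^N`. -/
def chi (p N : ℕ) (b y : Fin N → Fin p) : ℂ := ∏ j, om p ^ ((b j : ℕ) * (y j : ℕ))

lemma om_prim (p : ℕ) [NeZero p] : IsPrimitiveRoot (om p) p :=
  Complex.isPrimitiveRoot_exp p (NeZero.ne p)

lemma norm_om (p : ℕ) [NeZero p] : ‖om p‖ = 1 :=
  Complex.norm_eq_one_of_pow_eq_one (om_prim p).pow_eq_one (NeZero.ne p)

lemma norm_chi (p N : ℕ) [NeZero p] (b y : Fin N → Fin p) : ‖chi p N b y‖ = 1 := by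
  simp [chi, norm_prod, norm_om]

lemma conj_chi_mul (p N : ℕ) [NeZero p] (b y : Fin N → Fin p) :
    (starRingEnd ℂ) (chi p N b y) * chi p N b y = 1 := by
  rw [Complex.conj_mul', norm_chi]
  simp

lemma chi_ne_zero (p N : ℕ) [NeZero p] (b y : Fin N → Fin p) : chi p N b y ≠ 0 := by
  rw [← norm_ne_zero_iff, norm_chi]
  exact one_ne_zero

lemma chi_add (p N : ℕ) [NeZero p] (b y z : Fin N → Fin p) :
    chi p N b (y + z) = chi p N b y * chi p N b z := by
  unfold chi
  rw [← Finset.prod_mul_distrib]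
  refine Finset.prod_congr rfl fun j _ => ?_
  rw [← pow_add, ← mul_add, Pi.add_apply, Fin.val_add, mul_comm, pow_mul,
    ← pow_mod_orderOf (om p), ← (om_prim p).eq_orderOf, Nat.mod_mod, mul_comm (b j : ℕ), pow_mul]
  congr 1
  conv_rhs => rw [← pow_mod_orderOf (om p), ← (om_prim p).eq_orderOf]

/-- Character orthogonality. -/
lemma sum_chi (p N : ℕ) [NeZero p] (x y : Fin N → Fin p) :
    ∑ b, chi p N b x * (starRingEnd ℂ) (chi p N b y) = if x = y then (p : ℂ) ^ N else 0 := by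
  have hexp : ∀ b, chi p N b x * (starRingEnd ℂ) (chi p N b y)
      = ∏ j, (om p ^ (x j : ℕ) * (starRingEnd ℂ) (om p ^ (y j : ℕ))) ^ (b j : ℕ) := by
    intro b
    unfold chi
    rw [map_prod, ← Finset.prod_mul_distrib]
    refine Finset.prod_congr rfl fun j _ => ?_
    rw [mul_pow, map_pow, map_pow, ← pow_mul, ← pow_mul, mul_comm (x j : ℕ), mul_comm (y j : ℕ)]
  simp_rw [hexp]
  rw [← Fintype.prod_sum fun j (β : Fin p) =>
    (om p ^ (x j : ℕ) * (starRingEnd ℂ) (om p ^ (y j : ℕ))) ^ (β : ℕ)]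
  have hconj : ∀ n : ℕ, om p ^ n * (starRingEnd ℂ) (om p ^ n) = 1 := by
    intro n
    rw [Complex.mul_conj', norm_pow, norm_om]
    simp
  split_ifs with hxy
  · subst hxy
    simp [hconj, -map_pow]
  · obtain ⟨j, hj⟩ := Function.ne_iff.mp hxy
    refine Finset.prod_eq_zero (Finset.mem_univ j) ?_
    set z := om p ^ (x j : ℕ) * (starRingEnd ℂ) (om p ^ (y j : ℕ)) with hz
    have hz1 : z ≠ 1 := by
      intro h1
      apply hj
      have : om p ^ (x j : ℕ) = om p ^ (y j : ℕ) := by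
        calc om p ^ (x j : ℕ) = z * om p ^ (y j : ℕ) := by
              rw [hz, mul_assoc, mul_comm ((starRingEnd ℂ) _), hconj, mul_one]
          _ = _ := by rw [h1, one_mul]
      exact Fin.ext ((om_prim p).pow_inj (x j).2 (y j).2 this)
    have hzp : z ^ p = 1 := by
      rw [hz, mul_pow, ← map_pow, ← pow_mul, ← pow_mul, mul_comm (x j : ℕ), mul_comm (y j : ℕ),
        pow_mul, pow_mul, (om_prim p).pow_eq_one]
      simp
    rw [Fin.sum_univ_eq_sum_range (fun n => z ^ n) p, geom_sum_eq hz1, hzp]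
    simp

/-- The action of a Pauli string on vectors, as a translation followed by a phase. -/
def pv (p N : ℕ) [NeZero p] (a b : Fin N → Fin p) (ψ : (Fin N → Fin p) → ℂ) :
    (Fin N → Fin p) → ℂ := fun x => chi p N b (x - a) * ψ (x - a)

lemma pauli_mulVec (p N : ℕ) [NeZero p] (a b : Fin N → Fin p) (ψ : (Fin N → Fin p) → ℂ) :
    Matrix.mulVec (pauliString p N a b) ψ = pv p N a b ψ := by
  ext x
  have hent : ∀ y, pauliString p N a b x y = if y = x - a then chi p N b y else 0 := by
    intro y
    simp only [pauliString, Matrix.of_apply]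
    split_ifs with h
    · subst h
      exact Finset.prod_congr rfl fun j _ => by simp [om]
    · obtain ⟨j, hj⟩ := Function.ne_iff.mp h
      refine Finset.prod_eq_zero (Finset.mem_univ j) (if_neg fun h' => hj ?_)
      simp [h']
  simp [Matrix.mulVec, dotProduct, hent, pv]

lemma pv_smul (p N : ℕ) [NeZero p] (a b : Fin N → Fin p) (ψ : (Fin N → Fin p) → ℂ) (z : ℂ) :
    pv p N a b (z • ψ) = z • pv p N a b ψ := by
  ext x
  simp [pv, mul_left_comm]

/-- Pauli strings act unitarily. -/
lemma ip_pv (p N : ℕ) [NeZero p] (a b : Fin N → Fin p) (φ ψ : (Fin N → Fin p) → ℂ) :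
    ip (pv p N a b φ) (pv p N a b ψ) = ip φ ψ := by
  unfold ip
  rw [← Equiv.sum_comp (Equiv.subRight a) fun i => (starRingEnd ℂ) (φ i) * ψ i]
  refine Finset.sum_congr rfl fun x _ => ?_
  simp only [pv, map_mul, Equiv.subRight_apply]
  linear_combination ((starRingEnd ℂ) (φ (x - a)) * ψ (x - a)) * conj_chi_mul p N b (x - a)

/-- Pauli strings commute up to a scalar. -/
lemma pv_comm (p N : ℕ) [NeZero p] (a b a' b' : Fin N → Fin p) (ψ : (Fin N → Fin p) → ℂ) :
    pv p N a b (pv p N a' b' ψ)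
      = (chi p N b a' / chi p N b' a) • pv p N a' b' (pv p N a b ψ) := by
  ext x
  have h1 : chi p N b (x - a) = chi p N b (x - a - a') * chi p N b a' := by
    rw [← chi_add, sub_add_cancel]
  have h2 : chi p N b' (x - a') = chi p N b' (x - a - a') * chi p N b' a := by
    rw [← chi_add, sub_right_comm, sub_add_cancel]
  have h3 : x - a' - a = x - a - a' := sub_right_comm _ _ _
  have := chi_ne_zero p N b' a
  simp only [pv, Pi.smul_apply, smul_eq_mul, h1, h2, h3]
  field_simp

/-- A Pauli string permutes, up to scalars, a basis that is the complete list of common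
eigenvectors of a class of Pauli strings; hence it preserves the outcome entropy. -/
lemma shannonH_pv (p N : ℕ) [NeZero p] (b : (Fin N → Fin p) → ((Fin N → Fin p) → ℂ))
    (horth : ∀ k l, ip (b k) (b l) = if k = l then 1 else 0)
    (C : Set ((Fin N → Fin p) × (Fin N → Fin p)))
    (hC : ∀ c ∈ C, ∀ k, ∃ μ : ℂ,
        Matrix.mulVec (pauliString p N c.1 c.2) (b k) = μ • b k)
    (hC' : ∀ v : (Fin N → Fin p) → ℂ, v ≠ 0 →
        (∀ c ∈ C, ∃ μ : ℂ, Matrix.mulVec (pauliString p N c.1 c.2) v = μ • v) →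
        ∃ (k : Fin N → Fin p) (z : ℂ), v = z • b k)
    (e f : Fin N → Fin p) (ψ : (Fin N → Fin p) → ℂ) :
    shannonH b (pv p N e f ψ) = shannonH b ψ := by
  have hperm : ∀ k, ∃ (l : Fin N → Fin p) (z : ℂ), pv p N e f (b k) = z • b l := by
    intro k
    refine hC' _ ?_ ?_
    · intro h0
      have := ip_pv p N e f (b k) (b k)
      rw [h0, horth] at this
      simp [ip] at this
    · intro c hc
      obtain ⟨μ, hμ⟩ := hC c hc k
      rw [pauli_mulVec] at hμ
      refine ⟨chi p N c.2 e / chi p N f c.1 * μ, ?_⟩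
      rw [pauli_mulVec, pv_comm, hμ, pv_smul, smul_smul]
  choose σ z hσ using hperm
  have hz : ∀ k, ‖z k‖ = 1 := by
    intro k
    have := ip_pv p N e f (b k) (b k)
    rw [hσ, ip_smul_left, ip_smul_right, horth, horth, if_pos rfl, if_pos rfl, mul_one,
      Complex.conj_mul'] at this
    have h2 : ‖z k‖ ^ 2 = 1 := by exact_mod_cast this
    exact (pow_eq_one_iff_of_nonneg (norm_nonneg _) two_ne_zero).mp h2
  have hinj : Function.Injective σ := by
    intro k l hkl
    by_contra hne
    have := ip_pv p N e f (b k) (b l)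
    rw [hσ, hσ, ip_smul_left, ip_smul_right, horth, horth, if_pos hkl, if_neg hne, mul_one] at this
    have h2 := congrArg norm this
    simp [hz] at h2
  have hnorm : ∀ k, ‖ip (b (σ k)) (pv p N e f ψ)‖ = ‖ip (b k) ψ‖ := by
    intro k
    rw [← ip_pv p N e f (b k) ψ, hσ, ip_smul_left, norm_mul, RCLike.norm_conj, hz, one_mul]
  unfold shannonH
  rw [← Equiv.sum_comp (Equiv.ofBijective σ (Finite.injective_iff_bijective.mp hinj))]
  exact Finset.sum_congr rfl fun k _ => by rw [Equiv.ofBijective_apply, hnorm]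

/-- Entries of the twirl `∑ P |ψ⟩⟨ψ| P† = d ‖ψ‖² 1`. -/
lemma sum_pv_mul_star (p N : ℕ) [NeZero p] (ψ : (Fin N → Fin p) → ℂ)
    (hψ : ∑ i, ‖ψ i‖ ^ 2 = 1) (x y : Fin N → Fin p) :
    ∑ c : (Fin N → Fin p) × (Fin N → Fin p),
      pv p N c.1 c.2 ψ x * (starRingEnd ℂ) (pv p N c.1 c.2 ψ y)
      = if x = y then (p : ℂ) ^ N else 0 := by
  rw [Fintype.sum_prod_type]
  have h : ∀ a, ∑ b, pv p N a b ψ x * (starRingEnd ℂ) (pv p N a b ψ y)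
      = (ψ (x - a) * (starRingEnd ℂ) (ψ (y - a))) * if x = y then (p : ℂ) ^ N else 0 := by
    intro a
    have := sum_chi p N (x - a) (y - a)
    simp only [sub_left_inj] at this
    rw [← this, Finset.mul_sum]
    refine Finset.sum_congr rfl fun b _ => ?_
    simp only [pv, map_mul]
    ring
  simp only [h]
  rw [← Finset.sum_mul]
  split_ifs with hxy
  · subst hxy
    have h1 : ∑ a, ψ (x - a) * (starRingEnd ℂ) (ψ (x - a)) = 1 := by
      refine (Equiv.sum_comp (Equiv.subLeft x) fun i => ψ i * (starRingEnd ℂ) (ψ i)).trans ?_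
      simp_rw [Complex.mul_conj']
      exact_mod_cast hψ
    rw [h1, one_mul]
  · rw [mul_zero]

/-- For any family of `m` mutually unbiased bases of `ℂ^d`, `d = p^N`, based on
generalized Pauli matrices (each basis being the unique common eigenbasis of a class
of commuting Pauli strings), the accessible information of the uniform ensemble of
all `d·m` basis vectors equals `log d - (1/m) min_ψ ∑_t H(B_t, ψ)`. -/
theorem pauli_mub_accessible_info (p N m : ℕ) [NeZero p] (hp : p.Prime) (hm : 0 < m)
    (B : Fin m → (Fin N → Fin p) → ((Fin N → Fin p) → ℂ))
    (horth : ∀ t, ∀ k l, ip (B t k) (B t l) = if k = l then 1 else 0)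
    (hmub : ∀ t t', t ≠ t' → ∀ k l,
      ‖ip (B t k) (B t' l)‖ = 1 / Real.sqrt ((p : ℝ) ^ N))
    (hpauli : ∀ t, ∃ C : Set ((Fin N → Fin p) × (Fin N → Fin p)),
      (∀ c ∈ C, ∀ k, ∃ μ : ℂ,
        Matrix.mulVec (pauliString p N c.1 c.2) (B t k) = μ • B t k) ∧
      (∀ v : (Fin N → Fin p) → ℂ, v ≠ 0 →
        (∀ c ∈ C, ∃ μ : ℂ, Matrix.mulVec (pauliString p N c.1 c.2) v = μ • v) →
        ∃ (k : Fin N → Fin p) (z : ℂ), v = z • B t k)) :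
    sSup (accInfoSet (fun _ : Fin m × (Fin N → Fin p) => 1 / ((p : ℝ) ^ N * m))
        (fun a => B a.1 a.2))
      = Real.log ((p : ℝ) ^ N)
        - (1 / (m : ℝ)) * sInf {x : ℝ | ∃ ψ : (Fin N → Fin p) → ℂ,
            (∑ i, ‖ψ i‖ ^ 2 = 1) ∧ x = ∑ t, shannonH (B t) ψ} := by
  have hp0 : (0 : ℝ) < p := by exact_mod_cast hp.pos
  have hd : (0 : ℝ) < (p : ℝ) ^ N := by positivity
  have hm' : (0 : ℝ) < m := by exact_mod_cast hm
  have hT : (Fintype.card (Fin m) : ℝ) = m := by simp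
  have hι : (Fintype.card (Fin N → Fin p) : ℝ) = (p : ℝ) ^ N := by simp
  set d : ℝ := (p : ℝ) ^ N with hd_def
  set S : Set ℝ := {x : ℝ | ∃ ψ : (Fin N → Fin p) → ℂ,
            (∑ i, ‖ψ i‖ ^ 2 = 1) ∧ x = ∑ t, shannonH (B t) ψ} with hS
  have hbase : ∀ t k, ip (B t k) (B t k) = 1 := fun t k => by rw [horth, if_pos rfl]
  have hSbdd : BddBelow S := by
    refine ⟨0, ?_⟩
    rintro x ⟨ψ, hψ, rfl⟩
    refine Finset.sum_nonneg fun t _ => Finset.sum_nonneg fun k _ => ?_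
    refine Real.negMulLog_nonneg (by positivity) ?_
    rw [← hψ, ← parseval (B t) (horth t) ψ]
    exact Finset.single_le_sum (f := fun k => ‖ip (B t k) ψ‖ ^ 2)
      (fun k _ => by positivity) (Finset.mem_univ k)
  have hSne : S.Nonempty := by
    refine ⟨_, B ⟨0, hm⟩ 0, ?_, rfl⟩
    have := hbase ⟨0, hm⟩ 0
    rw [ip_self_re] at this
    exact_mod_cast this
  -- the value reached by the Pauli translates of a unit vector
  have hach : ∀ ψ : (Fin N → Fin p) → ℂ, ∑ i, ‖ψ i‖ ^ 2 = 1 →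
      Real.log d - 1 / m * ∑ t, shannonH (B t) ψ ∈
        accInfoSet (fun _ : Fin m × (Fin N → Fin p) => 1 / (d * m)) (fun a => B a.1 a.2) := by
    intro ψ hψ
    let R := (Fin N → Fin p) × (Fin N → Fin p)
    let eR : Fin (Fintype.card R) ≃ R := (Fintype.equivFin R).symm
    let φ : Fin (Fintype.card R) → (Fin N → Fin p) → ℂ :=
      fun i => pv p N (eR i).1 (eR i).2 ψ
    let M : Fin (Fintype.card R) → Matrix (Fin N → Fin p) (Fin N → Fin p) ℂ :=
      fun i => ((1 / d : ℝ) : ℂ) • Matrix.vecMulVec (φ i) (star (φ i))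
    have hM : IsPOVM M := by
      constructor
      · intro i
        refine (Matrix.posSemidef_vecMulVec_self_star (φ i)).smul ?_
        exact_mod_cast (one_div_pos.mpr hd).le
      · ext x y
        rw [Matrix.sum_apply, Matrix.one_apply]
        have h1 := sum_pv_mul_star p N ψ hψ x y
        rw [← Equiv.sum_comp eR] at h1
        have h2 : ∑ i, M i x y = ((1 / d : ℝ) : ℂ) * if x = y then (p : ℂ) ^ N else 0 := by
          rw [← h1, Finset.mul_sum]
          rfl
        rw [h2]
        split_ifs
        · have : ((p : ℂ) ^ N) = (d : ℂ) := by rw [hd_def]; push_cast; rfl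
          rw [this, ← Complex.ofReal_mul, one_div_mul_cancel hd.ne', Complex.ofReal_one]
        · rw [mul_zero]
    have hMv : ∀ i v, (ip v (Matrix.mulVec (M i) v)).re = 1 / d * ‖ip v (φ i)‖ ^ 2 := by
      intro i v
      have h1 : Matrix.mulVec (M i) v = (((1 / d : ℝ) : ℂ) * ip (φ i) v) • φ i := by
        ext x
        simp only [M, Matrix.mulVec, dotProduct, Matrix.smul_apply, Matrix.vecMulVec_apply, ip,
          Pi.smul_apply, smul_eq_mul, Pi.star_apply, RCLike.star_def, Finset.mul_sum,
          Finset.sum_mul]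
        exact Finset.sum_congr rfl fun y _ => by ring
      have h2 : ip (φ i) v = (starRingEnd ℂ) (ip v (φ i)) := by
        simp [ip, mul_comm]
      rw [h1, ip_smul_right, h2, mul_assoc, Complex.conj_mul']
      rw [← Complex.ofReal_pow, ← Complex.ofReal_mul, Complex.ofReal_re]
    have hφ : ∀ i, ∑ x, ‖φ i x‖ ^ 2 = 1 := by
      intro i
      have := ip_pv p N (eR i).1 (eR i).2 ψ ψ
      rw [ip_self_re, ip_self_re, hψ] at this
      exact_mod_cast this
    refine ⟨_, M, hM, ?_⟩
    have hμ : ∀ i t, ∑ k, (ip (B t k) (Matrix.mulVec (M i) (B t k))).re = 1 / d := by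
      intro i t
      simp_rw [hMv]
      rw [← Finset.mul_sum, parseval (B t) (horth t), hφ, mul_one]
    obtain ⟨-, hmi⟩ := mutualInfo_eq d m hd hm' hT hι
      (fun (a : Fin m × (Fin N → Fin p)) i =>
        (ip (B a.1 a.2) (Matrix.mulVec (M i) (B a.1 a.2))).re)
      (fun _ => 1 / d) (fun a => povm_row M hM _ (hbase a.1 a.2)) hμ
    rw [hmi]
    have hH : ∀ i, (∑ a : Fin m × (Fin N → Fin p), Real.negMulLog
        ((ip (B a.1 a.2) (Matrix.mulVec (M i) (B a.1 a.2))).re)) - m * Real.negMulLog (1 / d)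
        = 1 / d * ∑ t, shannonH (B t) ψ := by
      intro i
      have hHt : ∀ t, ∑ k, Real.negMulLog (‖ip (B t k) (φ i)‖ ^ 2) = shannonH (B t) ψ := by
        intro t
        obtain ⟨C, hC, hC'⟩ := hpauli t
        exact shannonH_pv p N (B t) (horth t) C hC hC' _ _ ψ
      have hsq : ∀ t, ∑ k, ‖ip (B t k) (φ i)‖ ^ 2 = 1 := fun t => by
        rw [parseval (B t) (horth t), hφ]
      simp_rw [hMv, Real.negMulLog_mul]
      rw [Fintype.sum_prod_type]
      simp only [Finset.sum_add_distrib, ← Finset.sum_mul, ← Finset.mul_sum, hHt, hsq]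
      simp
    simp_rw [hH]
    have hcard : (Fintype.card R : ℝ) = d * d := by
      rw [Fintype.card_prod, Nat.cast_mul, hι]
    rw [Finset.sum_const, Finset.card_univ, Fintype.card_fin, nsmul_eq_mul, hcard]
    field_simp
  have hub : ∀ x ∈ accInfoSet (fun _ : Fin m × (Fin N → Fin p) => 1 / (d * m))
      (fun a => B a.1 a.2), x ≤ Real.log d - 1 / m * sInf S := by
    rintro x ⟨r, M, hM, rfl⟩
    choose ν hν using fun i => exists_rankOne (M i) (hM.1 i)
    obtain ⟨hsum, hmi⟩ := mutualInfo_eq d m hd hm' hT hι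
      (fun (a : Fin m × (Fin N → Fin p)) i =>
        (ip (B a.1 a.2) (Matrix.mulVec (M i) (B a.1 a.2))).re)
      (fun i => ∑ j, ∑ y, ‖ν i j y‖ ^ 2) (fun a => povm_row M hM _ (hbase a.1 a.2)) (by
        intro i t
        simp_rw [hν]
        rw [Finset.sum_comm]
        exact Finset.sum_congr rfl fun j _ => parseval (B t) (horth t) _)
    rw [hmi]
    have hlow := Finset.sum_le_sum fun i (_ : i ∈ Finset.univ) =>
      entropy_lower B horth (sInf S) (fun ψ hψ => csInf_le hSbdd ⟨ψ, hψ, rfl⟩) (ν i) _ rfl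
    rw [← Finset.sum_mul, hsum, hT] at hlow
    simp_rw [hν]
    have h1 : 1 / (m : ℝ) * sInf S = 1 / (d * m) * (d * sInf S) := by
      field_simp
    rw [h1]
    exact sub_le_sub_left (mul_le_mul_of_nonneg_left hlow (by positivity)) _
  have hne : (accInfoSet (fun _ : Fin m × (Fin N → Fin p) => 1 / (d * m))
      (fun a => B a.1 a.2)).Nonempty := by
    obtain ⟨_, ψ, hψ, -⟩ := hSne
    exact ⟨_, hach ψ hψ⟩
  refine le_antisymm (csSup_le hne hub) ?_
  set s := sSup (accInfoSet (fun _ : Fin m × (Fin N → Fin p) => 1 / (d * m))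
      (fun a => B a.1 a.2)) with hs
  have hle : m * (Real.log d - s) ≤ sInf S := by
    refine le_csInf hSne ?_
    rintro x ⟨ψ, hψ, rfl⟩
    have h1 := le_csSup ⟨_, hub⟩ (hach ψ hψ)
    rw [← hs] at h1
    calc m * (Real.log d - s) ≤ m * (1 / m * ∑ t, shannonH (B t) ψ) :=
          mul_le_mul_of_nonneg_left (by linarith) hm'.le
      _ = _ := by field_simp
  have h2 : 1 / (m : ℝ) * (m * (Real.log d - s)) ≤ 1 / m * sInf S :=
    mul_le_mul_of_nonneg_left hle (by positivity)
  have h3 : 1 / (m : ℝ) * (m * (Real.log d - s)) = Real.log d - s := by field_simp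
  linarith
end
end
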